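/- Let f be analytic on 𝔻 and suppose there exists γ ∈ ℂ such that f'(z) + ∫₀ᶻ f(ξ) dξ = γ·cos z for all z ∈ 𝔻. Then there exist a, b ∈ ℂ such that f(z) = a·cos z + b·(sin z + z·cos z) for all z ∈ 𝔻; conversely, every f of this form satisfies such an equation. That is, for T = D + V acting on analytic functions on 𝔻 and X = ker T, the optimal domain [T, X] = T⁻¹(ker T) equals span{cos z, sin z + z·cos z}. -/

import Mathlib

open Metric

lemma aux_ftc (f F : ℂ → ℂ) (hf : DifferentiableOn ℂ f (ball (0:ℂ) 1))
    (hF : ∀ z ∈ ball (0:ℂ) 1, HasDerivAt F (f z) z) (z : ℂ) (hz : z ∈ ball (0:ℂ) 1) :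
    z * ∫ s in (0:ℝ)..1, f ((s : ℂ) * z) = F z - F 0 := by
  have hm : ∀ s ∈ Set.uIcc (0:ℝ) 1, (s:ℂ) * z ∈ ball (0:ℂ) 1 := by
    intro s hs
    rw [Set.uIcc_of_le zero_le_one] at hs
    simp only [mem_ball, dist_zero_right, norm_mul, Complex.norm_real, Real.norm_eq_abs] at hz ⊢
    rw [abs_of_nonneg hs.1]
    nlinarith [hs.1, hs.2, norm_nonneg z]
  have hd : ∀ s ∈ Set.uIcc (0:ℝ) 1,
      HasDerivAt (fun s : ℝ => F ((s:ℂ) * z)) (z * f ((s:ℂ) * z)) s := by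
    intro s hs
    have h1 : HasDerivAt (fun w : ℂ => w * z) z (s:ℂ) := by
      simpa using (hasDerivAt_id (s:ℂ)).mul_const z
    have h2 := ((hF _ (hm s hs)).comp (s:ℂ) h1).comp_ofReal
    rw [mul_comm] at h2
    exact h2
  have hc : ContinuousOn (fun s : ℝ => z * f ((s:ℂ) * z)) (Set.uIcc (0:ℝ) 1) := by
    refine continuousOn_const.mul (hf.continuousOn.comp ?_ hm)
    fun_prop
  have := intervalIntegral.integral_eq_sub_of_hasDerivAt hd hc.intervalIntegrable
  rw [intervalIntegral.integral_const_mul] at this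
  simpa using this

lemma aux_const (P : ℂ → ℂ) (hP : ∀ z ∈ ball (0:ℂ) 1, HasDerivAt P 0 z)
    (z : ℂ) (hz : z ∈ ball (0:ℂ) 1) : P z = P 0 := by
  refine isOpen_ball.is_const_of_deriv_eq_zero (convex_ball (0:ℂ) 1).isPreconnected
    (fun w hw => (hP w hw).differentiableAt.differentiableWithinAt)
    (fun w hw => (hP w hw).deriv) hz (by simp)

lemma aux_h (a b z : ℂ) : HasDerivAt
    (fun z => a * Complex.cos z + b * (Complex.sin z + z * Complex.cos z))
    (a * (-Complex.sin z) + b * (Complex.cos z + (1 * Complex.cos z + z * (-Complex.sin z)))) z :=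
  ((Complex.hasDerivAt_cos z).const_mul a).add
    (((Complex.hasDerivAt_sin z).add ((hasDerivAt_id z).mul (Complex.hasDerivAt_cos z))).const_mul b)

lemma aux_H (a b z : ℂ) : HasDerivAt
    (fun z => a * Complex.sin z + b * (z * Complex.sin z))
    (a * Complex.cos z + b * (Complex.sin z + z * Complex.cos z)) z := by
  have := ((Complex.hasDerivAt_sin z).const_mul a).add
    (((hasDerivAt_id z).mul (Complex.hasDerivAt_sin z)).const_mul b)
  exact this.congr_deriv (by simp)

/-- For analytic `f` on `𝔻`, there exists `γ ∈ ℂ` with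
`f'(z) + ∫₀ᶻ f(ξ)dξ = γ·cos z` on `𝔻` iff there exist `a, b ∈ ℂ` with
`f(z) = a·cos z + b·(sin z + z·cos z)` on `𝔻`; i.e. for `T = D + V` the optimal domain
`[T, ker T] = T⁻¹(ker T)` equals `span{cos z, sin z + z·cos z}`. -/
theorem optimalDomain_D_add_V_eq_span
    (f : ℂ → ℂ) (hf : DifferentiableOn ℂ f (ball (0:ℂ) 1)) :
    (∃ γ : ℂ, ∀ z ∈ ball (0:ℂ) 1,
        deriv f z + z * ∫ s in (0:ℝ)..1, f ((s : ℂ) * z) = γ * Complex.cos z) ↔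
      ∃ a b : ℂ, ∀ z ∈ ball (0:ℂ) 1,
        f z = a * Complex.cos z + b * (Complex.sin z + z * Complex.cos z) := by
  constructor
  · rintro ⟨γ, h⟩
    obtain ⟨F, hF⟩ := hf.isExactOn_ball
    refine ⟨f 0, γ / 2, fun z hz => ?_⟩
    have hf' : ∀ w ∈ ball (0:ℂ) 1, HasDerivAt f (γ * Complex.cos w - (F w - F 0)) w := by
      intro w hw
      have h1 := (hf.differentiableAt (isOpen_ball.mem_nhds hw)).hasDerivAt
      have h2 := h w hw
      rw [aux_ftc f F hf hF w hw] at h2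
      rwa [eq_sub_of_add_eq h2] at h1
    have hg := fun w hw => (hf' w hw).sub (aux_h (f 0) (γ / 2) w)
    have hG := fun w hw => ((hF w hw).sub_const (F 0)).sub (aux_H (f 0) (γ / 2) w)
    have hP := aux_const _ (fun w hw => (((hg w hw).mul (Complex.hasDerivAt_cos w)).add
      ((hG w hw).mul (Complex.hasDerivAt_sin w))).congr_deriv (by simp; ring)) z hz
    have hQ := aux_const _ (fun w hw => (((hG w hw).mul (Complex.hasDerivAt_cos w)).sub
      ((hg w hw).mul (Complex.hasDerivAt_sin w))).congr_deriv (by simp; ring)) z hz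
    simp at hP hQ
    have := Complex.sin_sq_add_cos_sq z
    linear_combination Complex.cos z * hP - Complex.sin z * hQ -
      (f z - (f 0 * Complex.cos z + γ / 2 * (Complex.sin z + z * Complex.cos z))) * this
  · rintro ⟨a, b, h⟩
    refine ⟨2 * b, fun z hz => ?_⟩
    rw [aux_ftc f _ hf (fun w hw => (h w hw) ▸ aux_H a b w) z hz]
    have : f =ᶠ[nhds z] fun z => a * Complex.cos z + b * (Complex.sin z + z * Complex.cos z) :=
      Filter.eventuallyEq_of_mem (isOpen_ball.mem_nhds hz) h
    rw [this.deriv_eq, (aux_h a b z).deriv]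
    simp
    ring
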